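/- Define a(0) = 1/2, a(1) = 5, and a(n) = 9(2n−1) for n ≥ 2, and b(0) = 4 and b(n) = −(9n² − 16) for n ≥ 1. Then the convergents p(n)/q(n) of the continued fraction with partial quotients (a(n), b(n)) converge to 2^{1/3} (the real cube root of 2) as n → ∞. -/

import Mathlib

open Filter Topology

noncomputable def cfG (s : ℝ) : ℝ := 3 - s - 2 / s

noncomputable def cfC (s : ℝ) : ℝ := s ^ ((1 : ℝ) / 3)

noncomputable def cfJ (n : ℕ) : ℝ := ∫ s in (1:ℝ)..2, cfC s * cfG s ^ n

noncomputable def cfK (n : ℕ) : ℝ :=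
  (-2 / 3) * ∏ k ∈ Finset.range n, ((9 * ((k : ℝ) + 1) ^ 2 - 16) / (3 * ((k : ℝ) + 1)))

lemma cfC_deriv {s : ℝ} (hs : 0 < s) : HasDerivAt cfC (cfC s / (3 * s)) s := by
  have h := Real.hasDerivAt_rpow_const (x := s) (p := (1 : ℝ) / 3) (Or.inl hs.ne')
  have e : (1 : ℝ) / 3 * s ^ ((1 : ℝ) / 3 - 1) = cfC s / (3 * s) := by
    rw [Real.rpow_sub hs, Real.rpow_one]
    unfold cfC
    field_simp
  rw [e] at h
  exact h

lemma cfG_deriv {s : ℝ} (hs : 0 < s) : HasDerivAt cfG (-1 + 2 / s ^ 2) s := by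
  have h := ((hasDerivAt_const s (3:ℝ)).sub (hasDerivAt_id s)).sub
    ((hasDerivAt_const s (2:ℝ)).div (hasDerivAt_id s) hs.ne')
  refine HasDerivAt.congr_deriv (h) ?_
  simp
  ring

lemma cf_cont (n : ℕ) : ContinuousOn (fun s => cfC s * cfG s ^ n) (Set.uIcc 1 2) := by
  intro s hs
  rw [Set.uIcc_of_le (by norm_num)] at hs
  have h0 : 0 < s := by linarith [hs.1]
  exact ((cfC_deriv h0).continuousAt.mul ((cfG_deriv h0).continuousAt.pow n)).continuousWithinAt

lemma cf_int (n : ℕ) :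
    IntervalIntegrable (fun s => cfC s * cfG s ^ n) MeasureTheory.volume 1 2 :=
  (cf_cont n).intervalIntegrable

lemma cfP_deriv (α β γ s : ℝ) :
    HasDerivAt (fun s : ℝ => α * s ^ 2 + β * s + γ) (2 * α * s + β) s := by
  have h := (((hasDerivAt_pow 2 s).const_mul α).add ((hasDerivAt_id s).const_mul β)).add_const γ
  refine HasDerivAt.congr_deriv (h) ?_
  simp
  ring

lemma cfC_one : cfC 1 = 1 := by simp [cfC]

lemma cfJ0 : cfJ 0 = 3 / 4 * (2 * cfC 2 - 1) := by
  have h := intervalIntegral.integral_eq_sub_of_hasDerivAt (a := 1) (b := 2)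
    (f := fun s => cfC s * (0 * s ^ 2 + 3 / 4 * s + 0)) (f' := fun s => cfC s * cfG s ^ 0)
    (fun s hs => by
      rw [Set.uIcc_of_le (by norm_num)] at hs
      have h0 : 0 < s := by linarith [hs.1]
      refine HasDerivAt.congr_deriv ((cfC_deriv h0).mul (cfP_deriv 0 (3 / 4) 0 s)) ?_
      field_simp
      ring) (cf_int 0)
  rw [cfJ, h, cfC_one]
  ring

lemma cfJ1 : cfJ 1 = 9 / 14 * (13 / 2 - 5 * cfC 2) := by
  have h := intervalIntegral.integral_eq_sub_of_hasDerivAt (a := 1) (b := 2)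
    (f := fun s => cfC s * (-3 / 7 * s ^ 2 + 9 / 4 * s + (-6)))
    (f' := fun s => cfC s * cfG s ^ 1)
    (fun s hs => by
      rw [Set.uIcc_of_le (by norm_num)] at hs
      have h0 : 0 < s := by linarith [hs.1]
      refine HasDerivAt.congr_deriv ((cfC_deriv h0).mul (cfP_deriv (-3 / 7) (9 / 4) (-6) s)) ?_
      unfold cfG
      field_simp
      ring) (cf_int 1)
  rw [cfJ, h, cfC_one]
  ring

lemma cfJ_rec (m : ℕ) :
    (9 * ((m : ℝ) + 2) ^ 2 - 16) * cfJ (m + 2)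
      - 27 * ((m : ℝ) + 2) * (2 * m + 3) * cfJ (m + 1)
      + 9 * ((m : ℝ) + 1) * (m + 2) * cfJ m = 0 := by
  have hi := (((cf_int (m + 2)).const_mul (9 * ((m : ℝ) + 2) ^ 2 - 16)).sub
      ((cf_int (m + 1)).const_mul (27 * ((m : ℝ) + 2) * (2 * m + 3)))).add
      ((cf_int m).const_mul (9 * ((m : ℝ) + 1) * (m + 2)))
  have h := intervalIntegral.integral_eq_sub_of_hasDerivAt (a := 1) (b := 2)
    (f := fun s => cfC s * cfG s ^ (m + 1) *
      ((-3 * (3 * m + 2)) * s ^ 2 + (-36) * s + 6 * (3 * m + 10)))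
    (f' := fun s => (9 * ((m : ℝ) + 2) ^ 2 - 16) * (cfC s * cfG s ^ (m + 2))
      - 27 * ((m : ℝ) + 2) * (2 * m + 3) * (cfC s * cfG s ^ (m + 1))
      + 9 * ((m : ℝ) + 1) * (m + 2) * (cfC s * cfG s ^ m))
    (fun s hs => by
      rw [Set.uIcc_of_le (by norm_num)] at hs
      have h0 : 0 < s := by linarith [hs.1]
      refine HasDerivAt.congr_deriv (((cfC_deriv h0).mul ((cfG_deriv h0).pow (m + 1))).mul
        (cfP_deriv (-3 * (3 * m + 2)) (-36) (6 * (3 * m + 10)) s)) ?_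
      have e1 : cfG s ^ (m + 2) = cfG s ^ m * cfG s ^ 2 := by ring
      have e2 : cfG s ^ (m + 1) = cfG s ^ m * cfG s := by ring
      simp only [Pi.pow_apply, Pi.mul_apply, Nat.add_sub_cancel, e1, e2]
      push_cast
      generalize cfG s ^ m = X
      generalize cfC s = Y
      unfold cfG
      field_simp
      ring) hi
  rw [intervalIntegral.integral_add (((cf_int (m + 2)).const_mul _).sub
      ((cf_int (m + 1)).const_mul _)) ((cf_int m).const_mul _),
    intervalIntegral.integral_sub ((cf_int (m + 2)).const_mul _)
      ((cf_int (m + 1)).const_mul _)] at h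
  simp only [intervalIntegral.integral_const_mul] at h
  have g1 : cfG 1 = 0 := by norm_num [cfG]
  have g2 : cfG 2 = 0 := by norm_num [cfG]
  rw [g1, g2] at h
  simp only [cfJ]
  rw [h]
  simp

lemma cfK_succ (n : ℕ) :
    cfK (n + 1) = cfK n * ((9 * ((n : ℝ) + 1) ^ 2 - 16) / (3 * ((n : ℝ) + 1))) := by
  unfold cfK
  rw [Finset.prod_range_succ]
  ring

lemma cfK_bound (n : ℕ) : |cfK n| ≤ 3 ^ n * (n.factorial : ℝ) := by
  induction n with
  | zero => simp [cfK]; norm_num [abs_le]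
  | succ n ih =>
    rw [cfK_succ, abs_mul]
    have hn : (0:ℝ) ≤ n := n.cast_nonneg
    have h : |(9 * ((n : ℝ) + 1) ^ 2 - 16) / (3 * ((n : ℝ) + 1))| ≤ 3 * ((n : ℝ) + 1) := by
      rw [abs_le]
      constructor
      · rw [le_div_iff₀ (by positivity)]
        nlinarith
      · rw [div_le_iff₀ (by positivity)]
        nlinarith
    calc _ ≤ (3 ^ n * (n.factorial : ℝ)) * (3 * ((n : ℝ) + 1)) := by gcongr
      _ = _ := by rw [Nat.factorial_succ]; push_cast; ring

lemma cfJ_bound (n : ℕ) : |cfJ n| ≤ 2 * (1 / 4) ^ n := by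
  have h := intervalIntegral.norm_integral_le_of_norm_le_const (a := 1) (b := 2)
    (f := fun s => cfC s * cfG s ^ n) (C := 2 * (1 / 4) ^ n) (fun s hs => by
      rw [Set.uIoc_of_le (by norm_num)] at hs
      have h0 : 0 < s := by linarith [hs.1]
      have hc : |cfC s| ≤ 2 := by
        unfold cfC
        rw [abs_of_pos (Real.rpow_pos_of_pos h0 _)]
        calc s ^ ((1:ℝ) / 3) ≤ s ^ (1:ℝ) :=
              Real.rpow_le_rpow_of_exponent_le hs.1.le (by norm_num)
          _ ≤ 2 := by rw [Real.rpow_one]; exact hs.2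
      have hg : |cfG s| ≤ 1 / 4 := by
        have e : cfG s = (s - 1) * (2 - s) / s := by
          unfold cfG
          field_simp
          ring
        rw [e, abs_le]
        constructor
        · rw [le_div_iff₀ h0]
          nlinarith [hs.1, hs.2, mul_nonneg (sub_nonneg.2 hs.1.le) (sub_nonneg.2 hs.2)]
        · rw [div_le_iff₀ h0]
          nlinarith [hs.1, hs.2, sq_nonneg (2 * s - 3)]
      rw [Real.norm_eq_abs, abs_mul, abs_pow]
      gcongr)
  rw [Real.norm_eq_abs] at h
  norm_num at h
  unfold cfJ
  norm_num
  exact h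

theorem stmt_12 
    (a b p q : ℕ → ℝ)
    (ha0 : a 0 = 1 / 2)
    (ha1 : a 1 = 5)
    (ha : ∀ n : ℕ, 2 ≤ n → a n = 9 * (2 * (n : ℝ) - 1))
    (hb0 : b 0 = 4)
    (hb : ∀ n : ℕ, 1 ≤ n → b n = -(9 * (n : ℝ) ^ 2 - 16))
    (hp0 : p 0 = a 0) (hq0 : q 0 = 1)
    (hp1 : p 1 = a 0 * a 1 + b 0) (hq1 : q 1 = a 1)
    (hp : ∀ n : ℕ, p (n + 2) = a (n + 2) * p (n + 1) + b (n + 1) * p n)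
    (hq : ∀ n : ℕ, q (n + 2) = a (n + 2) * q (n + 1) + b (n + 1) * q n) :
    Tendsto (fun n => p n / q n) atTop (𝓝 ((2 : ℝ) ^ ((1 : ℝ) / 3))) := by
  change Tendsto (fun n => p n / q n) atTop (𝓝 (cfC 2))
  have hA : ∀ n : ℕ, a (n + 2) = 9 * (2 * (n : ℝ) + 3) := by
    intro n
    rw [ha _ (by omega)]
    push_cast
    ring
  have hB : ∀ n : ℕ, b (n + 1) = -(9 * ((n : ℝ) + 1) ^ 2 - 16) := by
    intro n
    rw [hb _ (by omega)]
    push_cast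
    ring
  have hr : ∀ n : ℕ, p n - cfC 2 * q n = cfK n * cfJ n ∧
      p (n + 1) - cfC 2 * q (n + 1) = cfK (n + 1) * cfJ (n + 1) := by
    intro n
    induction n with
    | zero =>
      constructor
      · rw [hp0, hq0, ha0, cfJ0]
        simp [cfK]
        ring
      · rw [hp1, hq1, ha0, ha1, hb0, zero_add, cfJ1]
        simp [cfK]
        ring
    | succ n ih =>
      refine ⟨ih.2, ?_⟩
      have e : p (n + 1 + 1) - cfC 2 * q (n + 1 + 1) =
          a (n + 2) * (p (n + 1) - cfC 2 * q (n + 1)) + b (n + 1) * (p n - cfC 2 * q n) := by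
        rw [hp, hq]
        ring
      rw [e, ih.1, ih.2, hA, hB, cfK_succ (n + 1), cfK_succ n]
      have hJ := cfJ_rec n
      have hn : (0:ℝ) ≤ n := n.cast_nonneg
      have h1 : (n : ℝ) + 1 ≠ 0 := by positivity
      have h2 : (n : ℝ) + 2 ≠ 0 := by positivity
      have h3 : (n : ℝ) + 1 + 1 ≠ 0 := by positivity
      push_cast
      field_simp
      linear_combination (-cfK n * (9 * ((n : ℝ) + 1) ^ 2 - 16)) * hJ
  have hqb : ∀ n : ℕ, 3 ^ n * (n.factorial : ℝ) ≤ q n ∧ 3 * ((n : ℝ) + 1) * q n ≤ q (n + 1) := by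
    intro n
    induction n with
    | zero => simp [hq0, hq1, ha1]; norm_num
    | succ n ih =>
      have hn : (0:ℝ) ≤ n := n.cast_nonneg
      have h0 : 0 ≤ q n := le_trans (by positivity) ih.1
      have h1 : 3 ^ (n + 1) * ((n + 1).factorial : ℝ) ≤ q (n + 1) := by
        refine le_trans ?_ ih.2
        rw [Nat.factorial_succ]
        push_cast
        have := mul_le_mul_of_nonneg_left ih.1 (by positivity : (0:ℝ) ≤ 3 * ((n : ℝ) + 1))
        refine le_trans (le_of_eq ?_) this
        ring
      refine ⟨h1, ?_⟩
      have h2 : 0 ≤ q (n + 1) := le_trans (by positivity) h1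
      rw [hq, hA, hB]
      push_cast
      have := mul_le_mul_of_nonneg_left ih.2 (by positivity : (0:ℝ) ≤ 3 * ((n : ℝ) + 1))
      nlinarith [mul_nonneg hn h2]
  rw [tendsto_iff_norm_sub_tendsto_zero]
  have ht : Tendsto (fun n : ℕ => 2 * (1 / 4 : ℝ) ^ n) atTop (𝓝 0) := by
    simpa using (tendsto_pow_atTop_nhds_zero_of_lt_one (r := (1 / 4 : ℝ))
      (by norm_num) (by norm_num)).const_mul 2
  refine squeeze_zero (fun _ => norm_nonneg _) (fun n => ?_) ht
  have hqn := (hqb n).1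
  have hpos : 0 < q n := lt_of_lt_of_le (by positivity) hqn
  have e : p n / q n - cfC 2 = cfK n * cfJ n / q n := by
    rw [← (hr n).1]
    field_simp
  rw [e, Real.norm_eq_abs, abs_div, abs_of_pos hpos, div_le_iff₀ hpos, abs_mul, mul_comm]
  exact mul_le_mul (cfJ_bound n) ((cfK_bound n).trans hqn) (abs_nonneg _) (by positivity)
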